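/- arXiv:2305.16068 — 4 statements merged into one kernel-verified Lean document; each statement's English description precedes it below -/
import Mathlib

section
/- Let μ be a measure, 1 < p ≤ 2, and let x, y ∈ L^p(μ) with x Birkhoff–James orthogonal to y (i.e., ‖x + βy‖_{L^p} ≥ ‖x‖_{L^p} for every scalar β ∈ ℂ). Then ‖x + y‖_{L^p}^p ≤ ‖x‖_{L^p}^p + (1/(2^{p-1} − 1))·‖y‖_{L^p}^p. -/
open MeasureTheory

/-!
Write `g z = ‖x + z‖ ^ p - ‖x‖ ^ p`. Applying the weak Clarkson inequality
`‖u + v‖ ^ p + ‖u - v‖ ^ p ≤ 2 * (‖u‖ ^ p + K * ‖v‖ ^ p)` to `u = x + y / 2` and `v = y / 2` shows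
that a bound `g (y / 2) ≤ C * ‖y / 2‖ ^ p` implies `g y ≤ (C + K) / 2 ^ (p - 1) * ‖y‖ ^ p`.
Applying it to `u = x` and `v = z`, together with `‖x‖ ≤ ‖x - z‖`, gives `g z ≤ 2 * K * ‖z‖ ^ p` for
`z = y / 2 ^ n`. Since `p > 1`, the map `C ↦ (C + K) / 2 ^ (p - 1)` is a contraction, and its fixed
point `K / (2 ^ (p - 1) - 1)` is the constant obtained as `n → ∞`.
-/

/-- Birkhoff–James orthogonality of `x` to `y` with respect to the scalars `𝕜`: no multiple of `y`
brings `x` closer to the origin. The relation is not symmetric in general. -/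
def BirkhoffOrthogonal (𝕜 : Type*) {V : Type*} [Norm V] [Add V] [SMul 𝕜 V] (x y : V) : Prop :=
  ∀ β : 𝕜, ‖x‖ ≤ ‖x + β • y‖

namespace BirkhoffOrthogonal

variable {𝕜 V : Type*} {x y : V}

theorem smul_right [Norm V] [Add V] [Monoid 𝕜] [MulAction 𝕜 V] (h : BirkhoffOrthogonal 𝕜 x y)
    (c : 𝕜) : BirkhoffOrthogonal 𝕜 x (c • y) := fun β ↦ by
  simpa only [smul_smul] using h (β * c)

theorem norm_le_norm_sub [Norm V] [AddCommGroup V] [Ring 𝕜] [Module 𝕜 V]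
    (h : BirkhoffOrthogonal 𝕜 x y) : ‖x‖ ≤ ‖x - y‖ := by
  simpa only [neg_smul, one_smul, ← sub_eq_add_neg] using h (-1)

theorem restrictScalars (R : Type*) [Norm V] [Add V] [Monoid 𝕜] [MulAction 𝕜 V] [SMul R 𝕜]
    [SMul R V] [IsScalarTower R 𝕜 V] (h : BirkhoffOrthogonal 𝕜 x y) :
    BirkhoffOrthogonal R x y := fun β ↦ by
  simpa only [smul_assoc, one_smul] using h (β • (1 : 𝕜))

end BirkhoffOrthogonal

/-- `p`-uniform smoothness of `V` in the form of a two-point inequality: the weak Clarkson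
inequality with constant `K`, which multiplies `‖v‖ ^ p` and is not itself raised to the
power `p`. -/
def UniformlySmoothWith (V : Type*) [SeminormedAddCommGroup V] (p K : ℝ) : Prop :=
  ∀ u v : V, ‖u + v‖ ^ p + ‖u - v‖ ^ p ≤ 2 * (‖u‖ ^ p + K * ‖v‖ ^ p)

theorem uniformlySmoothWith_one_of_innerProductSpace (V : Type*) [SeminormedAddCommGroup V]
    [InnerProductSpace ℝ V] {p : ℝ} (hp0 : 0 ≤ p) (hp2 : p ≤ 2) :
    UniformlySmoothWith V p 1 := fun u v ↦ by
  have rpow_eq_sq_rpow (w : V) : ‖w‖ ^ p = (‖w‖ ^ 2) ^ (p / 2) := by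
    rw [Real.rpow_div_two_eq_sqrt p (sq_nonneg _), Real.sqrt_sq (norm_nonneg w)]
  have concavity : 1 / 2 * (‖u + v‖ ^ 2) ^ (p / 2) + 1 / 2 * (‖u - v‖ ^ 2) ^ (p / 2)
      ≤ (1 / 2 * ‖u + v‖ ^ 2 + 1 / 2 * ‖u - v‖ ^ 2) ^ (p / 2) :=
    (Real.concaveOn_rpow (by linarith) (by linarith)).2 (sq_nonneg ‖u + v‖) (sq_nonneg ‖u - v‖)
      (by norm_num) (by norm_num) (by norm_num)
  have parallelogram : 1 / 2 * ‖u + v‖ ^ 2 + 1 / 2 * ‖u - v‖ ^ 2 = ‖u‖ ^ 2 + ‖v‖ ^ 2 := by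
    linear_combination 1 / 2 * parallelogram_law_with_norm ℝ u v
  have subadditivity : (‖u‖ ^ 2 + ‖v‖ ^ 2) ^ (p / 2) ≤ (‖u‖ ^ 2) ^ (p / 2) + (‖v‖ ^ 2) ^ (p / 2) :=
    Real.rpow_add_le_add_rpow (sq_nonneg _) (sq_nonneg _) (by linarith) (by linarith)
  rw [parallelogram] at concavity
  simp only [rpow_eq_sq_rpow]
  linarith

section Lp

open scoped ENNReal

variable {α E : Type*} [MeasurableSpace α] {μ : Measure α} [NormedAddCommGroup E] {p : ℝ≥0∞}

theorem integrable_norm_rpow_Lp (hp0 : p ≠ 0) (hp : p ≠ ∞) (f : Lp E p μ) :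
    Integrable (fun a ↦ ‖f a‖ ^ p.toReal) μ :=
  (Lp.memLp f).integrable_norm_rpow hp0 hp

theorem norm_rpow_Lp_eq_integral (hp0 : p ≠ 0) (hp : p ≠ ∞) (f : Lp E p μ) :
    ‖f‖ ^ p.toReal = ∫ a, ‖f a‖ ^ p.toReal ∂μ := by
  have hf := Lp.aestronglyMeasurable f
  rw [Lp.norm_def, toReal_eLpNorm hf, lpNorm_eq_integral_norm_rpow_toReal hp0 hp hf,
    Real.rpow_inv_rpow (by positivity) (ENNReal.toReal_ne_zero.2 ⟨hp0, hp⟩)]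

theorem UniformlySmoothWith.lift_Lp {K : ℝ} [Fact (1 ≤ p)] (hp : p ≠ ∞)
    (hE : UniformlySmoothWith E p.toReal K) (μ : Measure α) :
    UniformlySmoothWith (Lp E p μ) p.toReal K := fun f g ↦ by
  have hp0 : p ≠ 0 := (one_pos.trans_le Fact.out).ne'
  have integrable := integrable_norm_rpow_Lp (E := E) (μ := μ) hp0 hp
  simp only [norm_rpow_Lp_eq_integral hp0 hp]
  rw [← integral_add (integrable _) (integrable _), ← integral_const_mul,
    ← integral_add (integrable f) ((integrable g).const_mul K), ← integral_const_mul]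
  refine integral_mono_ae ((integrable _).add (integrable _))
    (((integrable f).add ((integrable g).const_mul K)).const_mul 2) ?_
  filter_upwards [Lp.coeFn_add f g, Lp.coeFn_sub f g] with a hadd hsub
  simpa only [hadd, hsub, Pi.add_apply, Pi.sub_apply] using hE (f a) (g a)

theorem uniformlySmoothWith_one_Lp_of_innerProductSpace [InnerProductSpace ℝ E] (μ : Measure α)
    {p : ℝ} [Fact (1 ≤ ENNReal.ofReal p)] (hp2 : p ≤ 2) :
    UniformlySmoothWith (Lp E (ENNReal.ofReal p) μ) p 1 := by
  have hp0 : 0 ≤ p := zero_le_one.trans (ENNReal.one_le_ofReal.1 Fact.out)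
  have toReal_eq : (ENNReal.ofReal p).toReal = p := ENNReal.toReal_ofReal hp0
  have hE : UniformlySmoothWith E (ENNReal.ofReal p).toReal 1 :=
    toReal_eq.symm ▸ uniformlySmoothWith_one_of_innerProductSpace E hp0 hp2
  simpa only [toReal_eq] using hE.lift_Lp ENNReal.ofReal_ne_top μ

end Lp

namespace UniformlySmoothWith

variable {V : Type*} [SeminormedAddCommGroup V] {p K : ℝ} {x y : V}

theorem norm_add_rpow_le_of_norm_le_norm_sub (hV : UniformlySmoothWith V p K) (hp : 0 ≤ p)
    (hxy : ‖x‖ ≤ ‖x - y‖) : ‖x + y‖ ^ p ≤ ‖x‖ ^ p + 2 * K * ‖y‖ ^ p := by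
  linarith [hV x y, Real.rpow_le_rpow (norm_nonneg x) hxy hp]

variable [NormedSpace ℝ V]

theorem norm_add_rpow_le_of_half (hV : UniformlySmoothWith V p K) {C : ℝ}
    (hC : ‖x + (2⁻¹ : ℝ) • y‖ ^ p ≤ ‖x‖ ^ p + C * ‖(2⁻¹ : ℝ) • y‖ ^ p) :
    ‖x + y‖ ^ p ≤ ‖x‖ ^ p + (C + K) / 2 ^ (p - 1) * ‖y‖ ^ p := by
  have clarkson := hV (x + (2⁻¹ : ℝ) • y) ((2⁻¹ : ℝ) • y)
  rw [add_sub_cancel_right, add_assoc, ← add_smul, ← two_mul, mul_inv_cancel₀ two_ne_zero,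
    one_smul] at clarkson
  have norm_half : 2 * ‖(2⁻¹ : ℝ) • y‖ ^ p = ‖y‖ ^ p / 2 ^ (p - 1) := by
    rw [norm_smul_of_nonneg (by norm_num), Real.mul_rpow (by norm_num) (norm_nonneg y),
      Real.inv_rpow zero_le_two, Real.rpow_sub_one two_ne_zero]
    field_simp
  calc ‖x + y‖ ^ p
      ≤ ‖x‖ ^ p + (C + K) * (2 * ‖(2⁻¹ : ℝ) • y‖ ^ p) := by linarith
    _ = ‖x‖ ^ p + (C + K) / 2 ^ (p - 1) * ‖y‖ ^ p := by rw [norm_half]; ring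

-- The constant is the `n`-th iterate of `C ↦ (C + K) / 2 ^ (p - 1)` starting from `2 * K`.
theorem norm_add_rpow_le_of_birkhoffOrthogonal (hV : UniformlySmoothWith V p K) (hp : 1 < p)
    (hxy : BirkhoffOrthogonal ℝ x y) (n : ℕ) :
    ‖x + y‖ ^ p ≤ ‖x‖ ^ p + (K / (2 ^ (p - 1) - 1) +
      (2 * K - K / (2 ^ (p - 1) - 1)) * ((2 ^ (p - 1))⁻¹) ^ n) * ‖y‖ ^ p := by
  induction n generalizing y with
  | zero =>
    simpa only [pow_zero, mul_one, add_sub_cancel] using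
      hV.norm_add_rpow_le_of_norm_le_norm_sub (by linarith) hxy.norm_le_norm_sub
  | succ n ih =>
    convert hV.norm_add_rpow_le_of_half (ih (hxy.smul_right 2⁻¹)) using 3
    have : (2 : ℝ) ^ (p - 1) - 1 ≠ 0 :=
      (sub_pos.2 (Real.one_lt_rpow one_lt_two (sub_pos.2 hp))).ne'
    rw [pow_succ]
    field_simp
    ring

end UniformlySmoothWith

theorem pythag_upper_small_p_general {V : Type*} [SeminormedAddCommGroup V] [NormedSpace ℝ V]
    {p K : ℝ} (hV : UniformlySmoothWith V p K) (hp : 1 < p) {x y : V}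
    (hxy : BirkhoffOrthogonal ℝ x y) :
    ‖x + y‖ ^ p ≤ ‖x‖ ^ p + K / (2 ^ (p - 1) - 1) * ‖y‖ ^ p := by
  have ratio_lt_one : ((2 : ℝ) ^ (p - 1))⁻¹ < 1 :=
    inv_lt_one_of_one_lt₀ (Real.one_lt_rpow one_lt_two (sub_pos.2 hp))
  have ratio_pow := tendsto_pow_atTop_nhds_zero_of_lt_one (by positivity) ratio_lt_one
  have bound_tendsto := (((ratio_pow.const_mul (2 * K - K / (2 ^ (p - 1) - 1))).const_add
    (K / (2 ^ (p - 1) - 1))).mul_const (‖y‖ ^ p)).const_add (‖x‖ ^ p)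
  rw [mul_zero, add_zero] at bound_tendsto
  exact ge_of_tendsto' bound_tendsto (hV.norm_add_rpow_le_of_birkhoffOrthogonal hp hxy)

/-- Lower Pythagorean-type inequality fails... Upper Pythagorean inequality for `1 < p ≤ 2`:
if `x` is Birkhoff–James orthogonal to `y` in `L^p(μ)`, then
`‖x + y‖^p ≤ ‖x‖^p + (1/(2^{p-1} − 1))·‖y‖^p`. -/
theorem pythag_upper_small_p {α : Type*} [MeasurableSpace α] (μ : Measure α)
    (p : ℝ) (hp1 : 1 < p) (hp2 : p ≤ 2)
    (x y : Lp ℂ (ENNReal.ofReal p) μ)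
    (horth : ∀ β : ℂ, ‖x‖ ≤ ‖x + β • y‖) :
    ‖x + y‖ ^ p ≤ ‖x‖ ^ p + (1 / (2 ^ (p - 1) - 1)) * ‖y‖ ^ p := by
  have : Fact (1 ≤ ENNReal.ofReal p) := ⟨ENNReal.one_le_ofReal.2 hp1.le⟩
  exact pythag_upper_small_p_general (uniformlySmoothWith_one_Lp_of_innerProductSpace μ hp2) hp1
    (BirkhoffOrthogonal.restrictScalars (𝕜 := ℂ) ℝ horth)
end

section
/- Let μ be a measure, 1 < p ≤ 2, and let x, y ∈ L^p(μ) with x Birkhoff–James orthogonal to y (i.e., ‖x + βy‖_{L^p} ≥ ‖x‖_{L^p} for every scalar β ∈ ℂ). Then ‖x + y‖_{L^p}^2 ≥ ‖x‖_{L^p}^2 + (p − 1)·‖y‖_{L^p}^2. -/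
open MeasureTheory

/-! By the two-point inequality
`2 * (‖a‖ ^ 2 + (p - 1) * ‖b‖ ^ 2) ^ (p / 2) ≤ ‖a + b‖ ^ p + ‖a - b‖ ^ p`
and Minkowski's inequality in `ℓ^(2/p)`, the space `L^p` is `2`-uniformly convex with constant
`c = p - 1`: `2 * (‖f‖ ^ 2 + c * ‖g‖ ^ 2) ≤ ‖f + g‖ ^ 2 + ‖f - g‖ ^ 2`.
If `‖x‖ ^ 2 + k * ‖z‖ ^ 2 ≤ ‖x + z‖ ^ 2` for all `z` on the line of `y`, then taking
`f = x + y / 2` and `g = y / 2` improves the constant `k` to `(k + c) / 2`. Orthogonality says that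
`k = 0` is admissible, and iterating leads to `k = c`. -/

section TwoPointInequality

lemma two_le_one_add_rpow_add_one_sub_rpow {e s : ℝ} (he : e ≤ 0) (hs : |s| < 1) :
    2 ≤ (1 + s) ^ e + (1 - s) ^ e := by
  obtain ⟨hs_left, hs_right⟩ := abs_lt.1 hs
  have hpos_add : 0 < 1 + s := by linarith
  have hpos_sub : 0 < 1 - s := by linarith
  have hprod : 1 ≤ (1 + s) ^ e * (1 - s) ^ e := by
    rw [← Real.mul_rpow hpos_add.le hpos_sub.le]
    exact Real.one_le_rpow_of_pos_of_le_one_of_nonpos (mul_pos hpos_add hpos_sub)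
      (by nlinarith [sq_nonneg s]) he
  nlinarith [sq_nonneg ((1 + s) ^ e - (1 - s) ^ e), Real.rpow_pos_of_pos hpos_add e,
    Real.rpow_pos_of_pos hpos_sub e]

lemma convexOn_one_add_rpow_add_one_sub_rpow_sub {p : ℝ} (hp1 : 1 ≤ p) (hp2 : p ≤ 2) :
    ConvexOn ℝ (Set.Icc (-1) 1)
      fun t : ℝ ↦ (1 + t) ^ p + (1 - t) ^ p - p * (p - 1) * t ^ 2 := by
  have hadd (r : ℝ) {s : ℝ} (hs : s ∈ Set.Ioo (-1) 1) :
      HasDerivAt (fun t : ℝ ↦ (1 + t) ^ r) (r * (1 + s) ^ (r - 1)) s := by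
    simpa using ((hasDerivAt_id s).const_add 1).rpow_const (p := r)
      (Or.inl (by simp only [id]; linarith [hs.1]))
  have hsub (r : ℝ) {s : ℝ} (hs : s ∈ Set.Ioo (-1) 1) :
      HasDerivAt (fun t : ℝ ↦ (1 - t) ^ r) (-(r * (1 - s) ^ (r - 1))) s := by
    simpa using ((hasDerivAt_id s).const_sub 1).rpow_const (p := r)
      (Or.inl (by simp only [id]; linarith [hs.2]))
  have hcont : Continuous fun t : ℝ ↦ (1 + t) ^ p + (1 - t) ^ p - p * (p - 1) * t ^ 2 := by
    have hrpow := Real.continuous_rpow_const (zero_le_one.trans hp1)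
    fun_prop
  refine convexOn_of_hasDerivWithinAt2_nonneg (convex_Icc _ _) hcont.continuousOn
    (f' := fun s ↦ p * (1 + s) ^ (p - 1) - p * (1 - s) ^ (p - 1) - 2 * p * (p - 1) * s)
    (f'' := fun s ↦ p * (p - 1) * ((1 + s) ^ (p - 1 - 1) + (1 - s) ^ (p - 1 - 1) - 2)) ?_ ?_ ?_
  all_goals
    rw [interior_Icc]
    intro s hs
  · have hquad := (hasDerivAt_pow 2 s).const_mul (p * (p - 1))
    exact (((hadd p hs).add (hsub p hs)).sub hquad).congr_deriv (by push_cast; ring)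
      |>.hasDerivWithinAt
  · have hlin := (hasDerivAt_id s).const_mul (2 * p * (p - 1))
    exact ((((hadd (p - 1) hs).const_mul p).sub ((hsub (p - 1) hs).const_mul p)).sub
      hlin).congr_deriv (by ring) |>.hasDerivWithinAt
  · have := two_le_one_add_rpow_add_one_sub_rpow (e := p - 1 - 1) (by linarith) (abs_lt.2 hs)
    exact mul_nonneg (mul_nonneg (by linarith) (by linarith)) (by linarith)

lemma two_add_mul_sq_le_one_add_rpow_add_one_sub_rpow {p t : ℝ} (hp1 : 1 ≤ p) (hp2 : p ≤ 2)
    (ht : |t| ≤ 1) : 2 + p * (p - 1) * t ^ 2 ≤ (1 + t) ^ p + (1 - t) ^ p := by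
  obtain ⟨ht_left, ht_right⟩ := abs_le.1 ht
  -- The convex function is even, hence minimal at `0`.
  have hmid := (convexOn_one_add_rpow_add_one_sub_rpow_sub hp1 hp2).2
    ⟨ht_left, ht_right⟩ (⟨neg_le_neg ht_right, neg_le.1 ht_left⟩ : -t ∈ Set.Icc (-1 : ℝ) 1)
    one_half_pos.le one_half_pos.le (add_halves 1)
  simp only [smul_eq_mul, mul_neg, add_neg_cancel, add_zero, sub_zero, Real.one_rpow, neg_sq,
    sub_neg_eq_add, ← sub_eq_add_neg, zero_pow two_ne_zero, mul_zero] at hmid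
  linarith

lemma sq_rpow_half {a : ℝ} (ha : 0 ≤ a) (p : ℝ) : (a ^ 2) ^ (p / 2) = a ^ p := by
  rw [← Real.rpow_natCast_mul ha]
  congr 1
  push_cast
  ring

lemma two_mul_rpow_le_add_rpow_add_sub_rpow {p a b : ℝ} (hp1 : 1 ≤ p) (hp2 : p ≤ 2)
    (hb : |b| ≤ a) :
    2 * (a ^ 2 + (p - 1) * b ^ 2) ^ (p / 2) ≤ (a + b) ^ p + (a - b) ^ p := by
  have ha : 0 ≤ a := (abs_nonneg b).trans hb
  obtain ⟨t, rfl, ht⟩ : ∃ t, b = a * t ∧ |t| ≤ 1 := by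
    rcases ha.eq_or_lt with rfl | ha
    · exact ⟨0, by simpa using hb, by simp⟩
    · exact ⟨b / a, by field_simp, by rwa [abs_div, abs_of_pos ha, div_le_one ha]⟩
  obtain ⟨ht_left, ht_right⟩ := abs_le.1 ht
  have hquad : 0 ≤ (p - 1) * t ^ 2 := mul_nonneg (by linarith) (sq_nonneg t)
  have bernoulli : (1 + (p - 1) * t ^ 2) ^ (p / 2) ≤ 1 + p / 2 * ((p - 1) * t ^ 2) :=
    rpow_one_add_le_one_add_mul_self (by linarith) (by linarith) (by linarith)
  have hscalar := two_add_mul_sq_le_one_add_rpow_add_one_sub_rpow hp1 hp2 ht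
  calc 2 * (a ^ 2 + (p - 1) * (a * t) ^ 2) ^ (p / 2)
      = a ^ p * (2 * (1 + (p - 1) * t ^ 2) ^ (p / 2)) := by
        rw [show a ^ 2 + (p - 1) * (a * t) ^ 2 = a ^ 2 * (1 + (p - 1) * t ^ 2) by ring,
          Real.mul_rpow (sq_nonneg a) (by linarith), sq_rpow_half ha]
        ring
    _ ≤ a ^ p * ((1 + t) ^ p + (1 - t) ^ p) := by gcongr; linarith
    _ = (a + a * t) ^ p + (a - a * t) ^ p := by
        rw [mul_add, ← Real.mul_rpow ha (by linarith), ← Real.mul_rpow ha (by linarith)]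
        ring_nf

lemma concaveOn_map_add_add_map_sub_le {E : Type*} [AddCommGroup E] [Module ℝ E] {f : E → ℝ}
    {S : Set E} (hf : ConcaveOn ℝ S f) {c d v : E} (hadd : c + v ∈ S) (hsub : c - v ∈ S)
    (hd : d ∈ segment ℝ (-v) v) : f (c + v) + f (c - v) ≤ f (c + d) + f (c - d) := by
  obtain ⟨w₁, w₂, hw₁, hw₂, hw, rfl⟩ := hd
  obtain rfl : w₂ = 1 - w₁ := eq_sub_of_add_eq' hw
  calc f (c + v) + f (c - v)
      = (w₁ • f (c - v) + (1 - w₁) • f (c + v)) + (w₁ • f (c + v) + (1 - w₁) • f (c - v)) := by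
        module
    _ ≤ f (w₁ • (c - v) + (1 - w₁) • (c + v)) + f (w₁ • (c + v) + (1 - w₁) • (c - v)) :=
        add_le_add (hf.2 hsub hadd hw₁ hw₂ hw) (hf.2 hadd hsub hw₁ hw₂ hw)
    _ = f (c + (w₁ • -v + (1 - w₁) • v)) + f (c - (w₁ • -v + (1 - w₁) • v)) := by
        congr 2 <;> module

variable {E : Type*} [NormedAddCommGroup E] [InnerProductSpace ℝ E]

lemma two_mul_rpow_le_norm_add_rpow_add_norm_sub_rpow {p : ℝ} (hp1 : 1 ≤ p) (hp2 : p ≤ 2)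
    (a b : E) :
    2 * (‖a‖ ^ 2 + (p - 1) * ‖b‖ ^ 2) ^ (p / 2) ≤ ‖a + b‖ ^ p + ‖a - b‖ ^ p := by
  wlog hab : ‖b‖ ≤ ‖a‖ generalizing a b
  · have hsq : ‖a‖ ^ 2 ≤ ‖b‖ ^ 2 := by gcongr; exact (not_le.1 hab).le
    calc 2 * (‖a‖ ^ 2 + (p - 1) * ‖b‖ ^ 2) ^ (p / 2)
        ≤ 2 * (‖b‖ ^ 2 + (p - 1) * ‖a‖ ^ 2) ^ (p / 2) := by
          gcongr 2 * ?_
          have := mul_nonneg (sub_nonneg.2 hp1) (sq_nonneg ‖b‖)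
          exact Real.rpow_le_rpow (by positivity) (by nlinarith) (by linarith)
      _ ≤ ‖a + b‖ ^ p + ‖a - b‖ ^ p := by
          rw [add_comm a b, norm_sub_rev a b]
          exact this b a (not_le.1 hab).le
  have hinner : 2 * inner ℝ a b ∈ segment ℝ (-(2 * (‖a‖ * ‖b‖))) (2 * (‖a‖ * ‖b‖)) := by
    rw [segment_eq_Icc (neg_le_self (by positivity)), Set.mem_Icc, ← abs_le, abs_mul, abs_two]
    exact mul_le_mul_of_nonneg_left (abs_real_inner_le_norm a b) zero_le_two
  calc 2 * (‖a‖ ^ 2 + (p - 1) * ‖b‖ ^ 2) ^ (p / 2)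
      ≤ (‖a‖ + ‖b‖) ^ p + (‖a‖ - ‖b‖) ^ p :=
        two_mul_rpow_le_add_rpow_add_sub_rpow hp1 hp2 (by rwa [abs_norm])
    _ = (‖a‖ ^ 2 + ‖b‖ ^ 2 + 2 * (‖a‖ * ‖b‖)) ^ (p / 2)
          + (‖a‖ ^ 2 + ‖b‖ ^ 2 - 2 * (‖a‖ * ‖b‖)) ^ (p / 2) := by
        rw [← sq_rpow_half (by positivity : 0 ≤ ‖a‖ + ‖b‖), ← sq_rpow_half (sub_nonneg.2 hab)]
        ring_nf
    _ ≤ (‖a‖ ^ 2 + ‖b‖ ^ 2 + 2 * inner ℝ a b) ^ (p / 2)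
          + (‖a‖ ^ 2 + ‖b‖ ^ 2 - 2 * inner ℝ a b) ^ (p / 2) := by
        refine concaveOn_map_add_add_map_sub_le
          (Real.concaveOn_rpow (by linarith) (by linarith)) ?_ ?_ hinner
        · exact Set.mem_Ici.2 (by positivity)
        · exact Set.mem_Ici.2 (by linarith [two_mul_le_add_sq ‖a‖ ‖b‖])
    _ = ‖a + b‖ ^ p + ‖a - b‖ ^ p := by
        rw [← sq_rpow_half (norm_nonneg (a + b)), ← sq_rpow_half (norm_nonneg (a - b)),
          norm_add_sq_real, norm_sub_sq_real]
        ring_nf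

end TwoPointInequality

section LpUniformConvexity

variable {α : Type*} [MeasurableSpace α] {μ : Measure α}

lemma norm_integral_rpow_add_rpow_le_integral {E F : Type*}
    [NormedAddCommGroup E] [NormedSpace ℝ E] [CompleteSpace E]
    [NormedAddCommGroup F] [NormedSpace ℝ F] [CompleteSpace F]
    {s : ℝ} (hs : 1 ≤ s) {u : α → E} {v : α → F} (hu : Integrable u μ) (hv : Integrable v μ) :
    (‖∫ t, u t ∂μ‖ ^ s + ‖∫ t, v t ∂μ‖ ^ s) ^ (1 / s)
      ≤ ∫ t, (‖u t‖ ^ s + ‖v t‖ ^ s) ^ (1 / s) ∂μ := by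
  have : Fact (1 ≤ ENNReal.ofReal s) := ⟨by simpa using hs⟩
  have hs0 : 0 < s := by linarith
  have htoReal : (ENNReal.ofReal s).toReal = s := ENNReal.toReal_ofReal hs0.le
  let L := (WithLp.prodContinuousLinearEquiv (ENNReal.ofReal s) ℝ E F).symm
  have hL (z : E × F) : ‖L z‖ = (‖z.1‖ ^ s + ‖z.2‖ ^ s) ^ (1 / s) := by
    rw [WithLp.prod_norm_eq_add (by rwa [htoReal]), htoReal]
    rfl
  have hint : ∫ t, L (u t, v t) ∂μ = L (∫ t, u t ∂μ, ∫ t, v t ∂μ) := by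
    rw [L.integral_comp_comm, integral_pair hu hv]
  have := norm_integral_le_integral_norm (μ := μ) fun t ↦ L (u t, v t)
  simpa only [hint, hL] using this

lemma toReal_mem_Icc_one_two {p : ENNReal} (hp1 : 1 ≤ p) (hp2 : p ≤ 2) :
    p.toReal ∈ Set.Icc 1 2 := by
  have hp_top : p ≠ ⊤ := ne_top_of_le_ne_top ENNReal.ofNat_ne_top hp2
  exact ⟨by simpa using ENNReal.toReal_mono hp_top hp1,
    ENNReal.toReal_mono ENNReal.ofNat_ne_top hp2⟩

variable {E : Type*} [NormedAddCommGroup E] {p : ENNReal}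

lemma integrable_norm_rpow_toReal (hp_zero : p ≠ 0) (hp_top : p ≠ ⊤) (f : Lp E p μ) :
    Integrable (fun t ↦ ‖f t‖ ^ p.toReal) μ :=
  (Lp.memLp f).integrable_norm_rpow hp_zero hp_top

lemma integral_norm_rpow_toReal_eq_norm_rpow (hp_zero : p ≠ 0) (hp_top : p ≠ ⊤)
    (f : Lp E p μ) : ∫ t, ‖f t‖ ^ p.toReal ∂μ = ‖f‖ ^ p.toReal := by
  have hint : 0 ≤ ∫ t, ‖f t‖ ^ p.toReal ∂μ := integral_nonneg fun t ↦ by positivity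
  rw [Lp.norm_def, (Lp.memLp f).eLpNorm_eq_integral_rpow_norm hp_zero hp_top,
    ENNReal.toReal_ofReal (by positivity),
    Real.rpow_inv_rpow hint (ENNReal.toReal_pos hp_zero hp_top).ne']

lemma norm_sq_add_norm_sq_rpow_le_integral {F : Type*} [NormedAddCommGroup F]
    (hp1 : 1 ≤ p) (hp2 : p ≤ 2) (f : Lp E p μ) (g : Lp F p μ) :
    (‖f‖ ^ 2 + ‖g‖ ^ 2) ^ (p.toReal / 2)
      ≤ ∫ t, (‖f t‖ ^ 2 + ‖g t‖ ^ 2) ^ (p.toReal / 2) ∂μ := by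
  have : Fact (1 ≤ p) := ⟨hp1⟩
  have hp_top : p ≠ ⊤ := ne_top_of_le_ne_top ENNReal.ofNat_ne_top hp2
  have hp_zero : p ≠ 0 := (zero_lt_one.trans_le hp1).ne'
  obtain ⟨hp_one, hp_two⟩ := toReal_mem_Icc_one_two hp1 hp2
  have hp_pos : 0 < p.toReal := zero_lt_one.trans_le hp_one
  have hpow {r : ℝ} (hr : 0 ≤ r) : (r ^ p.toReal) ^ (2 / p.toReal) = r ^ 2 := by
    rw [← Real.rpow_mul hr, mul_div_cancel₀ _ hp_pos.ne', Real.rpow_two]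
  have minkowski := norm_integral_rpow_add_rpow_le_integral
    ((one_le_div hp_pos).2 hp_two) (integrable_norm_rpow_toReal hp_zero hp_top f)
    (integrable_norm_rpow_toReal hp_zero hp_top g)
  have hnorm {r : ℝ} (hr : 0 ≤ r) : ‖r ^ p.toReal‖ = r ^ p.toReal :=
    Real.norm_of_nonneg (by positivity)
  simpa only [integral_norm_rpow_toReal_eq_norm_rpow hp_zero hp_top, hnorm (norm_nonneg _),
    hpow (norm_nonneg _), one_div_div] using minkowski

variable [InnerProductSpace ℝ E] [Fact (1 ≤ p)]

lemma two_mul_norm_sq_add_rpow_le (hp : p ≤ 2) (f g : Lp E p μ) :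
    2 * (‖f‖ ^ 2 + (p.toReal - 1) * ‖g‖ ^ 2) ^ (p.toReal / 2)
      ≤ ‖f + g‖ ^ p.toReal + ‖f - g‖ ^ p.toReal := by
  have hp_top : p ≠ ⊤ := ne_top_of_le_ne_top ENNReal.ofNat_ne_top hp
  have hp_zero : p ≠ 0 := (zero_lt_one.trans_le (Fact.out : 1 ≤ p)).ne'
  obtain ⟨hp_one, hp_two⟩ := toReal_mem_Icc_one_two Fact.out hp
  set c := √(p.toReal - 1)
  have hc : 0 ≤ c := Real.sqrt_nonneg _
  have hc_sq : c ^ 2 = p.toReal - 1 := Real.sq_sqrt (sub_nonneg.2 hp_one)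
  have hint (h : Lp E p μ) := integrable_norm_rpow_toReal hp_zero hp_top h
  have pointwise : ∀ᵐ t ∂μ, (‖f t‖ ^ 2 + ‖(c • g) t‖ ^ 2) ^ (p.toReal / 2)
      ≤ (‖(f + g) t‖ ^ p.toReal + ‖(f - g) t‖ ^ p.toReal) / 2 := by
    filter_upwards [Lp.coeFn_add f g, Lp.coeFn_sub f g, Lp.coeFn_smul c g] with t hadd hsub hsmul
    rw [hadd, hsub, hsmul, Pi.add_apply, Pi.sub_apply, Pi.smul_apply, norm_smul_of_nonneg hc,
      mul_pow, hc_sq, le_div_iff₀' two_pos]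
    exact two_mul_rpow_le_norm_add_rpow_add_norm_sub_rpow hp_one hp_two (f t) (g t)
  have key := calc (‖f‖ ^ 2 + ‖c • g‖ ^ 2) ^ (p.toReal / 2)
      ≤ ∫ t, (‖f t‖ ^ 2 + ‖(c • g) t‖ ^ 2) ^ (p.toReal / 2) ∂μ :=
        norm_sq_add_norm_sq_rpow_le_integral Fact.out hp f (c • g)
    _ ≤ ∫ t, (‖(f + g) t‖ ^ p.toReal + ‖(f - g) t‖ ^ p.toReal) / 2 ∂μ :=
        integral_mono_of_nonneg (.of_forall fun t ↦ by positivity)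
          (((hint _).add (hint _)).div_const 2) pointwise
    _ = (‖f + g‖ ^ p.toReal + ‖f - g‖ ^ p.toReal) / 2 := by
        rw [integral_div, integral_add (hint _) (hint _),
          integral_norm_rpow_toReal_eq_norm_rpow hp_zero hp_top,
          integral_norm_rpow_toReal_eq_norm_rpow hp_zero hp_top]
  rwa [norm_smul_of_nonneg hc, mul_pow, hc_sq, le_div_iff₀' two_pos] at key

lemma two_mul_norm_sq_add_le (hp : p ≤ 2) (f g : Lp E p μ) :
    2 * (‖f‖ ^ 2 + (p.toReal - 1) * ‖g‖ ^ 2) ≤ ‖f + g‖ ^ 2 + ‖f - g‖ ^ 2 := by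
  obtain ⟨hp_one, hp_two⟩ := toReal_mem_Icc_one_two Fact.out hp
  have hW : 0 ≤ ‖f‖ ^ 2 + (p.toReal - 1) * ‖g‖ ^ 2 := by
    have := mul_nonneg (sub_nonneg.2 hp_one) (sq_nonneg ‖g‖)
    positivity
  have power_mean := (Real.concaveOn_rpow (p := p.toReal / 2) (by linarith) (by linarith)).2
    (sq_nonneg ‖f + g‖) (sq_nonneg ‖f - g‖) one_half_pos.le one_half_pos.le (add_halves 1)
  simp only [smul_eq_mul, sq_rpow_half (norm_nonneg _)] at power_mean
  have hle : (‖f‖ ^ 2 + (p.toReal - 1) * ‖g‖ ^ 2) ^ (p.toReal / 2)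
      ≤ (1 / 2 * ‖f + g‖ ^ 2 + 1 / 2 * ‖f - g‖ ^ 2) ^ (p.toReal / 2) := by
    linarith [two_mul_norm_sq_add_rpow_le hp f g]
  linarith [(Real.rpow_le_rpow_iff hW (by positivity) (by linarith)).1 hle]

end LpUniformConvexity

section Orthogonality

variable {E : Type*} [SeminormedAddCommGroup E] [NormedSpace ℝ E] {c : ℝ}

lemma norm_sq_add_iterate_le
    (hE : ∀ a b : E, 2 * (‖a‖ ^ 2 + c * ‖b‖ ^ 2) ≤ ‖a + b‖ ^ 2 + ‖a - b‖ ^ 2) {x y : E}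
    (hxy : ∀ β : ℝ, ‖x‖ ≤ ‖x + β • y‖) (n : ℕ) (β : ℝ) :
    ‖x‖ ^ 2 + c * (1 - (1 / 2) ^ n) * ‖β • y‖ ^ 2 ≤ ‖x + β • y‖ ^ 2 := by
  induction n generalizing β with
  | zero => simpa using pow_le_pow_left₀ (norm_nonneg x) (hxy β) 2
  | succ n ih =>
    have hhalf := ih (β / 2)
    have huc := hE (x + (β / 2) • y) ((β / 2) • y)
    rw [add_sub_cancel_right, add_assoc, ← add_smul, add_halves] at huc
    have hnorm : ‖(β / 2) • y‖ ^ 2 = ‖β • y‖ ^ 2 / 4 := by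
      rw [norm_smul, norm_smul, norm_div, Real.norm_two]
      ring
    rw [hnorm] at hhalf huc
    rw [pow_succ (1 / 2 : ℝ)]
    linarith

lemma norm_sq_add_mul_norm_sq_le
    (hE : ∀ a b : E, 2 * (‖a‖ ^ 2 + c * ‖b‖ ^ 2) ≤ ‖a + b‖ ^ 2 + ‖a - b‖ ^ 2) {x y : E}
    (hxy : ∀ β : ℝ, ‖x‖ ≤ ‖x + β • y‖) :
    ‖x‖ ^ 2 + c * ‖y‖ ^ 2 ≤ ‖x + y‖ ^ 2 := by
  have hlim : Filter.Tendsto (fun n : ℕ ↦ ‖x‖ ^ 2 + c * (1 - (1 / 2 : ℝ) ^ n) * ‖y‖ ^ 2)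
      Filter.atTop (nhds (‖x‖ ^ 2 + c * (1 - 0) * ‖y‖ ^ 2)) := by
    have := tendsto_pow_atTop_nhds_zero_of_lt_one (r := (1 / 2 : ℝ)) (by norm_num) (by norm_num)
    exact (((this.const_sub 1).const_mul c).mul_const _).const_add _
  rw [sub_zero, mul_one] at hlim
  exact le_of_tendsto' hlim fun n ↦ by simpa using norm_sq_add_iterate_le hE hxy n 1

end Orthogonality

theorem pythag_lower_small_p_general {α : Type*} [MeasurableSpace α] {μ : Measure α}
    {E : Type*} [NormedAddCommGroup E] [InnerProductSpace ℝ E] {p : ENNReal} [Fact (1 ≤ p)]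
    (hp : p ≤ 2) {x y : Lp E p μ} (horth : ∀ β : ℝ, ‖x‖ ≤ ‖x + β • y‖) :
    ‖x‖ ^ 2 + (p.toReal - 1) * ‖y‖ ^ 2 ≤ ‖x + y‖ ^ 2 :=
  norm_sq_add_mul_norm_sq_le (E := Lp E p μ) (two_mul_norm_sq_add_le hp) horth

/-- Lower Pythagorean inequality for `1 < p ≤ 2`: if `x` is Birkhoff–James orthogonal to `y`
in `L^p(μ)`, then `‖x + y‖² ≥ ‖x‖² + (p − 1)·‖y‖²`. -/
theorem pythag_lower_small_p {α : Type*} [MeasurableSpace α] (μ : Measure α)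
    (p : ℝ) (hp1 : 1 < p) (hp2 : p ≤ 2)
    (x y : Lp ℂ (ENNReal.ofReal p) μ)
    (horth : ∀ β : ℂ, ‖x‖ ≤ ‖x + β • y‖) :
    ‖x + y‖ ^ 2 ≥ ‖x‖ ^ 2 + (p - 1) * ‖y‖ ^ 2 := by
  have : Fact (1 ≤ ENNReal.ofReal p) := ⟨ENNReal.one_le_ofReal.2 hp1.le⟩
  simpa only [ENNReal.toReal_ofReal (zero_le_one.trans hp1.le)] using
    pythag_lower_small_p_general (ENNReal.ofReal_le_ofNat.2 hp2) (x := x) (y := y)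
      fun β ↦ by simpa only [algebraMap_smul] using horth (algebraMap ℝ ℂ β)
end

section
/- Let μ be a measure, 2 ≤ p < ∞, and let x, y ∈ L^p(μ) with x Birkhoff–James orthogonal to y (i.e., ‖x + βy‖_{L^p} ≥ ‖x‖_{L^p} for every scalar β ∈ ℂ). Then ‖x + y‖_{L^p}^p ≥ ‖x‖_{L^p}^p + (1/(2^{p-1} − 1))·‖y‖_{L^p}^p. -/
open MeasureTheory

/-!
Clarkson's inequality at `(x + z, z)` gives `2 * F z ≤ F (2 • z)` for
`F z = ‖x + z‖ ^ p - ‖x‖ ^ p - C * ‖z‖ ^ p`, precisely because `C = 1 / (2 ^ (p - 1) - 1)` solves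
`2 ^ (p - 1) * C = C + 1`. Hence `2 ^ n * F (2⁻ⁿ • y) ≤ F y`, and orthogonality makes the left side
at least `-C * 2 ^ n * ‖2⁻ⁿ • y‖ ^ p`, which tends to `0` since `1 < p`.
-/

open Filter Topology

/-- The Clarkson inequality with exponent `p` in a normed group `E`, normalised so that for `p = 2`
it is the inequality `≤` of the parallelogram law. It is the only property of `L^p` on which the
Pythagorean lower bound rests. -/
def ClarksonInequality (p : ℝ) (E : Type*) [SeminormedAddCommGroup E] : Prop :=
  ∀ u v : E, 2 * (‖u‖ ^ p + ‖v‖ ^ p) ≤ ‖u + v‖ ^ p + ‖u - v‖ ^ p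

lemma ClarksonInequality.of_innerProductSpace {p : ℝ} (hp : 2 ≤ p) (E : Type*)
    [SeminormedAddCommGroup E] [InnerProductSpace ℝ E] : ClarksonInequality p E := by
  intro u v
  have hq : 1 ≤ p / 2 := by linarith
  have norm_rpow_eq (z : E) : ‖z‖ ^ p = (‖z‖ ^ 2) ^ (p / 2) := by
    rw [← Real.rpow_natCast_mul (norm_nonneg z), Nat.cast_ofNat, mul_div_cancel₀ p two_ne_zero]
  have parallelogram : ‖u‖ ^ 2 + ‖v‖ ^ 2 = 1 / 2 * ‖u + v‖ ^ 2 + 1 / 2 * ‖u - v‖ ^ 2 := by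
    linarith [parallelogram_law_with_norm ℝ u v]
  have superadditive :
      (‖u‖ ^ 2) ^ (p / 2) + (‖v‖ ^ 2) ^ (p / 2) ≤ (‖u‖ ^ 2 + ‖v‖ ^ 2) ^ (p / 2) :=
    Real.add_rpow_le_rpow_add (sq_nonneg _) (sq_nonneg _) hq
  have convex : (1 / 2 * ‖u + v‖ ^ 2 + 1 / 2 * ‖u - v‖ ^ 2) ^ (p / 2) ≤
      1 / 2 * (‖u + v‖ ^ 2) ^ (p / 2) + 1 / 2 * (‖u - v‖ ^ 2) ^ (p / 2) :=
    (convexOn_rpow hq).2 (sq_nonneg ‖u + v‖) (sq_nonneg ‖u - v‖) one_half_pos.le one_half_pos.le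
      (add_halves 1)
  rw [← parallelogram] at convex
  simp only [norm_rpow_eq]
  linarith

section Lp

variable {α E : Type*} [MeasurableSpace α] {μ : Measure α} [NormedAddCommGroup E] {p : ENNReal}

lemma norm_Lp_rpow_eq_integral (hp₀ : p ≠ 0) (hp : p ≠ ⊤) (f : Lp E p μ) :
    ‖f‖ ^ p.toReal = ∫ a, ‖f a‖ ^ p.toReal ∂μ := by
  have h_nonneg : 0 ≤ ∫ a, ‖f a‖ ^ p.toReal ∂μ := integral_nonneg fun a => by positivity
  rw [Lp.norm_def, (Lp.memLp f).eLpNorm_eq_integral_rpow_norm hp₀ hp,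
    ENNReal.toReal_ofReal (by positivity),
    Real.rpow_inv_rpow h_nonneg (ENNReal.toReal_ne_zero.2 ⟨hp₀, hp⟩)]

lemma ClarksonInequality.on_Lp [Fact (1 ≤ p)] (hp : p ≠ ⊤)
    (hE : ClarksonInequality p.toReal E) : ClarksonInequality p.toReal (Lp E p μ) := by
  intro u v
  have hp₀ : p ≠ 0 := (zero_lt_one.trans_le Fact.out).ne'
  have integrable (f : Lp E p μ) : Integrable (fun a => ‖f a‖ ^ p.toReal) μ :=
    (Lp.memLp f).integrable_norm_rpow hp₀ hp
  simp only [norm_Lp_rpow_eq_integral hp₀ hp]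
  rw [← integral_add (integrable u) (integrable v),
    ← integral_add (integrable (u + v)) (integrable (u - v)), ← integral_const_mul]
  refine integral_mono_ae (((integrable u).add (integrable v)).const_mul 2)
    ((integrable (u + v)).add (integrable (u - v))) ?_
  filter_upwards [Lp.coeFn_add u v, Lp.coeFn_sub u v] with a h_add h_sub
  simpa only [h_add, h_sub, Pi.add_apply, Pi.sub_apply] using hE (u a) (v a)

end Lp

lemma two_pow_mul_le_of_two_mul_le {g : ℝ → ℝ} (hg : ∀ t > 0, 2 * g t ≤ g (2 * t)) (n : ℕ)
    {t : ℝ} (ht : 0 < t) : 2 ^ n * g t ≤ g (2 ^ n * t) := by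
  induction n with
  | zero => simp
  | succ n ih =>
    calc 2 ^ (n + 1) * g t = 2 * (2 ^ n * g t) := by ring
      _ ≤ 2 * g (2 ^ n * t) := by gcongr
      _ ≤ g (2 * (2 ^ n * t)) := hg _ (by positivity)
      _ = g (2 ^ (n + 1) * t) := by ring_nf

lemma nonneg_of_two_mul_le_of_neg_rpow_le {g : ℝ → ℝ} {K p : ℝ} (hp : 1 < p)
    (hg : ∀ t > 0, 2 * g t ≤ g (2 * t)) (hK : ∀ t > 0, -(K * t ^ p) ≤ g t)
    {t : ℝ} (ht : 0 < t) : 0 ≤ g t := by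
  set r : ℝ := 2 / 2 ^ p
  have hr : r < 1 :=
    (div_lt_one (by positivity)).2 (Real.self_lt_rpow_of_one_lt one_lt_two hp)
  have lower_bound (n : ℕ) : -(K * t ^ p) * r ^ n ≤ g t := by
    calc -(K * t ^ p) * r ^ n = 2 ^ n * -(K * (t / 2 ^ n) ^ p) := by
          rw [Real.div_rpow ht.le (by positivity), ← Real.rpow_pow_comm zero_le_two, div_pow]
          ring
      _ ≤ 2 ^ n * g (t / 2 ^ n) := by gcongr; exact hK _ (by positivity)
      _ ≤ g (2 ^ n * (t / 2 ^ n)) := two_pow_mul_le_of_two_mul_le hg n (by positivity)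
      _ = g t := by rw [mul_div_cancel₀ t (by positivity)]
  have tendsto_zero : Tendsto (fun n : ℕ => -(K * t ^ p) * r ^ n) atTop (𝓝 0) := by
    simpa only [mul_zero] using
      (tendsto_pow_atTop_nhds_zero_of_lt_one (by positivity) hr).const_mul (-(K * t ^ p))
  exact le_of_tendsto' tendsto_zero lower_bound

section Pythagorean

variable {E : Type*} [SeminormedAddCommGroup E] [NormedSpace ℝ E] {p : ℝ}

lemma norm_smul_rpow_of_nonneg {t : ℝ} (ht : 0 ≤ t) (p : ℝ) (z : E) :
    ‖t • z‖ ^ p = t ^ p * ‖z‖ ^ p := by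
  rw [norm_smul_of_nonneg ht, Real.mul_rpow ht (norm_nonneg z)]

lemma ClarksonInequality.two_mul_sub_le (h : ClarksonInequality p E) {C : ℝ}
    (hC : 2 ^ (p - 1) * C = C + 1) (x z : E) :
    2 * (‖x + z‖ ^ p - ‖x‖ ^ p - C * ‖z‖ ^ p) ≤
      ‖x + (2 : ℝ) • z‖ ^ p - ‖x‖ ^ p - C * ‖(2 : ℝ) • z‖ ^ p := by
  have clarkson : 2 * (‖x + z‖ ^ p + ‖z‖ ^ p) ≤ ‖x + (2 : ℝ) • z‖ ^ p + ‖x‖ ^ p := by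
    simpa only [add_assoc, ← two_smul ℝ z, add_sub_cancel_right] using h (x + z) z
  have rescale : C * ‖(2 : ℝ) • z‖ ^ p = 2 * (C + 1) * ‖z‖ ^ p := by
    rw [norm_smul_rpow_of_nonneg zero_le_two, ← hC, Real.rpow_sub_one two_ne_zero]
    ring
  linarith

theorem ClarksonInequality.pythagorean_lower_bound (h : ClarksonInequality p E) (hp : 1 < p)
    {x y : E} (horth : ∀ t : ℝ, 0 < t → ‖x‖ ≤ ‖x + t • y‖) :
    ‖x‖ ^ p + 1 / (2 ^ (p - 1) - 1) * ‖y‖ ^ p ≤ ‖x + y‖ ^ p := by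
  set C : ℝ := 1 / (2 ^ (p - 1) - 1) with hC
  have hC_eq : 2 ^ (p - 1) * C = C + 1 := by
    have : (1 : ℝ) < 2 ^ (p - 1) := Real.one_lt_rpow one_lt_two (by linarith)
    rw [hC]
    field_simp [(sub_pos.2 this).ne']
    ring
  let excess (t : ℝ) : ℝ := ‖x + t • y‖ ^ p - ‖x‖ ^ p - C * ‖t • y‖ ^ p
  have excess_double (t : ℝ) : 2 * excess t ≤ excess (2 * t) := by
    simpa only [excess, smul_smul] using h.two_mul_sub_le hC_eq x (t • y)
  have excess_lower (t : ℝ) (ht : 0 < t) : -(C * ‖y‖ ^ p * t ^ p) ≤ excess t := by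
    have : ‖x‖ ^ p ≤ ‖x + t • y‖ ^ p := by gcongr; exact horth t ht
    simp only [excess, norm_smul_rpow_of_nonneg ht.le]
    linarith
  have excess_one : 0 ≤ excess 1 :=
    nonneg_of_two_mul_le_of_neg_rpow_le hp (fun t _ => excess_double t) excess_lower one_pos
  simp only [excess, one_smul] at excess_one
  linarith

end Pythagorean

theorem pythag_lower_large_p_general {α E : Type*} [MeasurableSpace α] (μ : Measure α)
    [NormedAddCommGroup E] [InnerProductSpace ℝ E] (p : ℝ) (hp2 : 2 ≤ p)
    (x y : Lp E (ENNReal.ofReal p) μ) (horth : ∀ t : ℝ, 0 < t → ‖x‖ ≤ ‖x + t • y‖) :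
    ‖x + y‖ ^ p ≥ ‖x‖ ^ p + (1 / (2 ^ (p - 1) - 1)) * ‖y‖ ^ p := by
  have : Fact (1 ≤ ENNReal.ofReal p) := ⟨ENNReal.one_le_ofReal.2 (by linarith)⟩
  have toReal_ofReal : (ENNReal.ofReal p).toReal = p := ENNReal.toReal_ofReal (by linarith)
  have clarkson : ClarksonInequality p (Lp E (ENNReal.ofReal p) μ) := by
    rw [← toReal_ofReal] at hp2
    have := (ClarksonInequality.of_innerProductSpace hp2 E).on_Lp (μ := μ) ENNReal.ofReal_ne_top
    rwa [toReal_ofReal] at this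
  exact clarkson.pythagorean_lower_bound (by linarith) horth

/-- Lower Pythagorean inequality for `2 ≤ p < ∞`: if `x` is Birkhoff–James orthogonal to `y`
in `L^p(μ)`, then `‖x + y‖^p ≥ ‖x‖^p + (1/(2^{p-1} − 1))·‖y‖^p`. -/
theorem pythag_lower_large_p {α : Type*} [MeasurableSpace α] (μ : Measure α)
    (p : ℝ) (hp2 : 2 ≤ p)
    (x y : Lp ℂ (ENNReal.ofReal p) μ)
    (horth : ∀ β : ℂ, ‖x‖ ≤ ‖x + β • y‖) :
    ‖x + y‖ ^ p ≥ ‖x‖ ^ p + (1 / (2 ^ (p - 1) - 1)) * ‖y‖ ^ p :=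
  pythag_lower_large_p_general μ p hp2 x y fun t _ =>
    algebraMap_smul ℂ t y ▸ horth (algebraMap ℝ ℂ t)
end

section
/- Let μ be a measure, 2 ≤ p < ∞, and let x, y ∈ L^p(μ) with x Birkhoff–James orthogonal to y (i.e., ‖x + βy‖_{L^p} ≥ ‖x‖_{L^p} for every scalar β ∈ ℂ). Then ‖x + y‖_{L^p}^2 ≤ ‖x‖_{L^p}^2 + (p − 1)·‖y‖_{L^p}^2. -/
open MeasureTheory

/-! A smoothness inequality `‖x + y‖² + ‖x - y‖² ≤ 2 (‖x‖² + c ‖y‖²)` yields the Pythagorean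
inequality by halving. If `x` is orthogonal to `y`, dropping `‖x - y‖ ≥ ‖x‖` gives
`‖x + y‖² ≤ ‖x‖² + 2 c ‖y‖²`; applied at `x + y / 2` and `y / 2`, the smoothness inequality turns a
bound with constant `(1 + ε) c` for `y / 2` into one with constant `(1 + ε / 2) c` for `y`.

For `L^p` the smoothness constant `p - 1` comes from the stronger inequality of Ball, Carlen and
Lieb, in which the left side is a `p`-th power mean. That form passes from the value space to `L^p`
by Minkowski's inequality in `L^(p/2)`, and in an inner product space convexity of `t ↦ t ^ (p/2)`
reduces it to parallel vectors, i.e. to a differential inequality for real numbers.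
-/

section RealInequalities

variable {p q a b r s : ℝ}

lemma rpow_mean_le_rpow_mean (hq : 0 ≤ q) (hqp : q ≤ p) (hp : 0 < p) (ha : 0 ≤ a) (hb : 0 ≤ b) :
    (a ^ q + b ^ q) / 2 ≤ ((a ^ p + b ^ p) / 2) ^ (q / p) := by
  have hconcave := (Real.concaveOn_rpow (div_nonneg hq hp.le) ((div_le_one hp).2 hqp)).2
    (Set.mem_Ici.2 (Real.rpow_nonneg ha p)) (Set.mem_Ici.2 (Real.rpow_nonneg hb p))
    (one_half_pos (α := ℝ)).le (one_half_pos (α := ℝ)).le (add_halves 1)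
  simp only [smul_eq_mul, ← Real.rpow_mul ha, ← Real.rpow_mul hb, mul_div_cancel₀ q hp.ne',
    ← mul_add] at hconcave
  simpa only [div_eq_inv_mul, one_div, mul_one] using hconcave

lemma convexOn_add_sub_le_add_sub {D : Set ℝ} {f : ℝ → ℝ} (hf : ConvexOn ℝ D f)
    (hadd : a + r ∈ D) (hsub : a - r ∈ D) (hs : |s| ≤ r) :
    f (a + s) + f (a - s) ≤ f (a + r) + f (a - r) := by
  obtain ⟨hs₁, hs₂⟩ := abs_le.1 hs
  obtain rfl | hr := ((abs_nonneg s).trans hs).eq_or_lt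
  · simp [le_antisymm hs₂ (by simpa using hs₁)]
  set w := (r + s) / (2 * r) with hw
  have hw₀ : 0 ≤ w := div_nonneg (by linarith) (by linarith)
  have hw₁ : 0 ≤ 1 - w := by
    rw [sub_nonneg, div_le_one (by linarith)]
    linarith
  have hplus := hf.2 hadd hsub hw₀ hw₁ (by ring)
  have hminus := hf.2 hsub hadd hw₀ hw₁ (by ring)
  simp only [smul_eq_mul] at hplus hminus
  rw [show w * (a + r) + (1 - w) * (a - r) = a + s by rw [hw]; field_simp; ring] at hplus
  rw [show w * (a - r) + (1 - w) * (a + r) = a - s by rw [hw]; field_simp; ring] at hminus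
  linarith

lemma add_rpow_add_sub_rpow_le (hp : 1 ≤ p) (hs : |s| ≤ r) (hr : r ≤ a) :
    (a + s) ^ p + (a - s) ^ p ≤ (a + r) ^ p + (a - r) ^ p :=
  have hr₀ : 0 ≤ r := (abs_nonneg s).trans hs
  convexOn_add_sub_le_add_sub (convexOn_rpow hp) (Set.mem_Ici.2 (by linarith))
    (Set.mem_Ici.2 (by linarith)) hs

lemma hasDerivAt_const_add_rpow (a b : ℝ) (hp : 1 ≤ p) :
    HasDerivAt (fun t ↦ (a + t) ^ p) (p * (a + b) ^ (p - 1)) b := by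
  simpa using ((hasDerivAt_id b).const_add a).rpow_const (Or.inr hp)

lemma hasDerivAt_const_sub_rpow (a b : ℝ) (hp : 1 ≤ p) :
    HasDerivAt (fun t ↦ (a - t) ^ p) (-(p * (a - b) ^ (p - 1))) b := by
  simpa using ((hasDerivAt_id b).const_sub a).rpow_const (Or.inr hp)

lemma add_rpow_sub_sub_rpow_le (hp : 2 ≤ p) (hb : 0 ≤ b) (hba : b ≤ a) :
    (a + b) ^ (p - 1) - (a - b) ^ (p - 1) ≤
      2 * (p - 1) * (((a + b) ^ p + (a - b) ^ p) / 2) ^ (1 - 2 / p) * b := by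
  have hderiv (t : ℝ) : HasDerivAt (fun t ↦ (a + t) ^ (p - 1) - (a - t) ^ (p - 1))
      (2 * (p - 1) * (((a + t) ^ (p - 2) + (a - t) ^ (p - 2)) / 2)) t := by
    refine ((hasDerivAt_const_add_rpow a t (by linarith)).sub
      (hasDerivAt_const_sub_rpow a t (by linarith))).congr_deriv ?_
    ring_nf
  have hmean {t : ℝ} (ht : t ∈ Set.Ico 0 b) : ((a + t) ^ (p - 2) + (a - t) ^ (p - 2)) / 2 ≤
      (((a + b) ^ p + (a - b) ^ p) / 2) ^ (1 - 2 / p) := by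
    have hadd : 0 ≤ a + t := by linarith [ht.1]
    have hsub : 0 ≤ a - t := by linarith [ht.2]
    calc ((a + t) ^ (p - 2) + (a - t) ^ (p - 2)) / 2
      _ ≤ (((a + t) ^ p + (a - t) ^ p) / 2) ^ ((p - 2) / p) :=
        rpow_mean_le_rpow_mean (by linarith) (by linarith) (by linarith) hadd hsub
      _ ≤ (((a + b) ^ p + (a - b) ^ p) / 2) ^ ((p - 2) / p) := by
        have := add_rpow_add_sub_rpow_le (by linarith : 1 ≤ p)
          ((abs_of_nonneg ht.1).trans_le ht.2.le) hba
        gcongr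
      _ = (((a + b) ^ p + (a - b) ^ p) / 2) ^ (1 - 2 / p) := by
        rw [sub_div, div_self (by linarith)]
  set C := (((a + b) ^ p + (a - b) ^ p) / 2) ^ (1 - 2 / p)
  refine image_le_of_deriv_right_le_deriv_boundary (B := fun t ↦ 2 * (p - 1) * C * t)
    (fun t _ ↦ (hderiv t).continuousAt.continuousWithinAt)
    (fun t _ ↦ (hderiv t).hasDerivWithinAt) (by simp) (by fun_prop)
    (fun t _ ↦ ((hasDerivAt_id t).const_mul _).hasDerivWithinAt) (fun t ht ↦ ?_)
    (Set.right_mem_Icc.2 hb)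
  rw [mul_one]
  exact mul_le_mul_of_nonneg_left (hmean ht) (by linarith)

lemma hasDerivAt_rpow_mean_add_sub (hp : 1 ≤ p) (hmean : ((a + b) ^ p + (a - b) ^ p) / 2 ≠ 0) :
    HasDerivAt (fun t ↦ (((a + t) ^ p + (a - t) ^ p) / 2) ^ (2 / p))
      ((((a + b) ^ p + (a - b) ^ p) / 2) ^ (2 / p - 1) *
        ((a + b) ^ (p - 1) - (a - b) ^ (p - 1))) b := by
  have hsum := ((hasDerivAt_const_add_rpow a b hp).add
    (hasDerivAt_const_sub_rpow a b hp)).div_const 2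
  refine (hsum.rpow_const (p := 2 / p) (Or.inl hmean)).congr_deriv ?_
  simp only [Pi.add_apply]
  field_simp
  ring

lemma rpow_mean_add_sub_le_of_le (hp : 2 ≤ p) (hb : 0 ≤ b) (hba : b ≤ a) :
    (((a + b) ^ p + (a - b) ^ p) / 2) ^ (2 / p) ≤ a ^ 2 + (p - 1) * b ^ 2 := by
  have hp₀ : p ≠ 0 := by linarith
  obtain rfl | ha := (hb.trans hba).eq_or_lt
  · simp [le_antisymm hba hb, Real.zero_rpow hp₀, hp₀]
  set F : ℝ → ℝ := fun t ↦ ((a + t) ^ p + (a - t) ^ p) / 2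
  have hF_pos {t : ℝ} (ht : t ∈ Set.Icc 0 b) : 0 < F t := by
    have := Real.rpow_pos_of_pos (by linarith [ht.1] : 0 < a + t) p
    have := Real.rpow_nonneg (by linarith [ht.2] : 0 ≤ a - t) p
    simp only [F]
    linarith
  have hF_zero : F 0 ^ (2 / p) = a ^ 2 := by
    simp only [F, add_zero, sub_zero, add_self_div_two]
    rw [← Real.rpow_mul ha.le, mul_div_cancel₀ 2 hp₀, Real.rpow_two]
  have hderiv {t : ℝ} (ht : t ∈ Set.Icc 0 b) : HasDerivAt (fun t ↦ F t ^ (2 / p))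
      (F t ^ (2 / p - 1) * ((a + t) ^ (p - 1) - (a - t) ^ (p - 1))) t :=
    hasDerivAt_rpow_mean_add_sub (by linarith) (hF_pos ht).ne'
  have hbound {t : ℝ} (ht : t ∈ Set.Icc 0 b) :
      F t ^ (2 / p - 1) * ((a + t) ^ (p - 1) - (a - t) ^ (p - 1)) ≤ 2 * (p - 1) * t :=
    calc _ ≤ F t ^ (2 / p - 1) * (2 * (p - 1) * F t ^ (1 - 2 / p) * t) :=
          mul_le_mul_of_nonneg_left (add_rpow_sub_sub_rpow_le hp ht.1 (ht.2.trans hba))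
            (Real.rpow_nonneg (hF_pos ht).le _)
      _ = F t ^ (2 / p - 1) * F t ^ (1 - 2 / p) * (2 * (p - 1) * t) := by ring
      _ = 2 * (p - 1) * t := by
          rw [← Real.rpow_add (hF_pos ht), sub_add_sub_cancel, sub_self, Real.rpow_zero, one_mul]
  refine image_le_of_deriv_right_le_deriv_boundary (B := fun t ↦ a ^ 2 + (p - 1) * t ^ 2)
    (B' := fun t ↦ 2 * (p - 1) * t)
    (fun t ht ↦ (hderiv ht).continuousAt.continuousWithinAt)
    (fun t ht ↦ (hderiv (Set.Ico_subset_Icc_self ht)).hasDerivWithinAt)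
    (by simp [hF_zero]) (by fun_prop) (fun t _ ↦ ?_)
    (fun t ht ↦ hbound (Set.Ico_subset_Icc_self ht)) (Set.right_mem_Icc.2 hb)
  refine ((((hasDerivAt_id t).pow 2).const_mul (p - 1)).const_add (a ^ 2)
    |>.congr_deriv ?_).hasDerivWithinAt
  simp only [id]
  ring

lemma rpow_mean_add_abs_sub_le (hp : 2 ≤ p) (ha : 0 ≤ a) (hb : 0 ≤ b) :
    (((a + b) ^ p + |a - b| ^ p) / 2) ^ (2 / p) ≤ a ^ 2 + (p - 1) * b ^ 2 := by
  obtain hba | hab := le_total b a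
  · rw [abs_of_nonneg (sub_nonneg.2 hba)]
    exact rpow_mean_add_sub_le_of_le hp hb hba
  · rw [abs_sub_comm, abs_of_nonneg (sub_nonneg.2 hab), add_comm a b]
    have hsq : a ^ 2 ≤ b ^ 2 := pow_le_pow_left₀ ha hab 2
    calc _ ≤ b ^ 2 + (p - 1) * a ^ 2 := rpow_mean_add_sub_le_of_le hp ha hab
      _ ≤ a ^ 2 + (p - 1) * b ^ 2 := by
          linarith [mul_le_mul_of_nonneg_left hsq (by linarith : 0 ≤ p - 2)]

end RealInequalities

/-- Birkhoff–James orthogonality of `x` to `y` over the scalars `𝕜`: no `𝕜`-multiple of `y` added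
to `x` shortens it. -/
def BirkhoffJamesOrthogonal (𝕜 : Type*) {V : Type*} [Norm V] [Add V] [SMul 𝕜 V] (x y : V) : Prop :=
  ∀ β : 𝕜, ‖x‖ ≤ ‖x + β • y‖

lemma BirkhoffJamesOrthogonal.smul_right {𝕜 V : Type*} [Norm V] [Add V] [Monoid 𝕜] [MulAction 𝕜 V]
    {x y : V} (h : BirkhoffJamesOrthogonal 𝕜 x y) (r : 𝕜) :
    BirkhoffJamesOrthogonal 𝕜 x (r • y) := fun β ↦ by
  simpa only [smul_smul] using h (β * r)

lemma BirkhoffJamesOrthogonal.restrictScalars (𝕜 : Type*) {𝕜' V : Type*} [Norm V] [Add V]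
    [SMul 𝕜 V] [SMul 𝕜 𝕜'] [Monoid 𝕜'] [MulAction 𝕜' V] [IsScalarTower 𝕜 𝕜' V] {x y : V}
    (h : BirkhoffJamesOrthogonal 𝕜' x y) : BirkhoffJamesOrthogonal 𝕜 x y := fun β ↦ by
  simpa only [smul_assoc, one_smul] using h (β • (1 : 𝕜'))

/-- Uniform smoothness of power type 2 with constant `c`, in the form of Ball, Carlen and Lieb:
the square of the `p`-th power mean of `‖x + y‖` and `‖x - y‖` is at most `‖x‖² + c ‖y‖²`. For
`p = 2` it is a one-sided parallelogram law. -/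
def TwoUniformlySmooth (V : Type*) [NormedAddCommGroup V] (p c : ℝ) : Prop :=
  ∀ x y : V, ((‖x + y‖ ^ p + ‖x - y‖ ^ p) / 2) ^ (2 / p) ≤ ‖x‖ ^ 2 + c * ‖y‖ ^ 2

namespace TwoUniformlySmooth

variable {p c : ℝ}

section NormedSpace

variable {V : Type*} [NormedAddCommGroup V] {x y : V}

lemma norm_add_sq_add_norm_sub_sq_le (hV : TwoUniformlySmooth V p c) (hp : 2 ≤ p) (x y : V) :
    ‖x + y‖ ^ 2 + ‖x - y‖ ^ 2 ≤ 2 * (‖x‖ ^ 2 + c * ‖y‖ ^ 2) := by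
  have hmean := (rpow_mean_le_rpow_mean zero_le_two hp (by linarith) (norm_nonneg (x + y))
    (norm_nonneg (x - y))).trans (hV x y)
  simp only [Real.rpow_two] at hmean
  linarith

variable [NormedSpace ℝ V]

lemma norm_add_sq_le_add_halves_pow (hV : TwoUniformlySmooth V p c) (hp : 2 ≤ p)
    (horth : BirkhoffJamesOrthogonal ℝ x y) (n : ℕ) :
    ‖x + y‖ ^ 2 ≤ ‖x‖ ^ 2 + (1 + (1 / 2) ^ n) * (c * ‖y‖ ^ 2) := by
  induction n generalizing y with
  | zero =>
    have hsub : ‖x‖ ≤ ‖x - y‖ := by simpa [sub_eq_add_neg] using horth (-1)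
    have hsq : ‖x‖ ^ 2 ≤ ‖x - y‖ ^ 2 := pow_le_pow_left₀ (norm_nonneg x) hsub 2
    linarith [hV.norm_add_sq_add_norm_sub_sq_le hp x y]
  | succ n ih =>
    have hhalf := ih (horth.smul_right (1 / 2))
    have hsmooth := hV.norm_add_sq_add_norm_sub_sq_le hp (x + (1 / 2 : ℝ) • y) ((1 / 2 : ℝ) • y)
    have hnorm : ‖(1 / 2 : ℝ) • y‖ ^ 2 = ‖y‖ ^ 2 / 4 := by
      rw [norm_smul, mul_pow, Real.norm_of_nonneg (by norm_num)]
      ring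
    rw [add_assoc, ← add_smul, add_halves, one_smul, add_sub_cancel_right, hnorm] at hsmooth
    rw [hnorm] at hhalf
    rw [pow_succ (1 / 2 : ℝ)]
    linarith

theorem norm_add_sq_le (hV : TwoUniformlySmooth V p c) (hp : 2 ≤ p)
    (horth : BirkhoffJamesOrthogonal ℝ x y) : ‖x + y‖ ^ 2 ≤ ‖x‖ ^ 2 + c * ‖y‖ ^ 2 := by
  have hlim : Filter.Tendsto (fun n : ℕ ↦ ‖x‖ ^ 2 + (1 + (1 / 2 : ℝ) ^ n) * (c * ‖y‖ ^ 2))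
      Filter.atTop (nhds (‖x‖ ^ 2 + (1 + 0) * (c * ‖y‖ ^ 2))) :=
    (((tendsto_pow_atTop_nhds_zero_of_lt_one (by norm_num) (by norm_num)).const_add 1).mul_const
      _).const_add _
  simpa only [add_zero, one_mul] using
    ge_of_tendsto' hlim (hV.norm_add_sq_le_add_halves_pow hp horth)

end NormedSpace

end TwoUniformlySmooth

section InnerProductSpace

variable {E : Type*} [NormedAddCommGroup E] [InnerProductSpace ℝ E] {p : ℝ}

lemma norm_add_rpow_add_norm_sub_rpow_le (hp : 2 ≤ p) (u v : E) :
    ‖u + v‖ ^ p + ‖u - v‖ ^ p ≤ (‖u‖ + ‖v‖) ^ p + |‖u‖ - ‖v‖| ^ p := by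
  have hsq {w : ℝ} (hw : 0 ≤ w) : w ^ p = (w ^ 2) ^ (p / 2) := by
    rw [← Real.rpow_natCast_mul hw, Nat.cast_ofNat, mul_div_cancel₀ p two_ne_zero]
  have hinner : |2 * inner ℝ u v| ≤ 2 * ‖u‖ * ‖v‖ := by
    rw [abs_mul, abs_two, mul_assoc]
    exact mul_le_mul_of_nonneg_left (abs_real_inner_le_norm u v) zero_le_two
  rw [hsq (norm_nonneg (u + v)), hsq (norm_nonneg (u - v)), hsq (by positivity : 0 ≤ ‖u‖ + ‖v‖),
    hsq (abs_nonneg (‖u‖ - ‖v‖)), sq_abs, norm_add_sq_real, norm_sub_sq_real, add_sq, sub_sq]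
  simpa only [add_right_comm, sub_add_eq_add_sub] using
    add_rpow_add_sub_rpow_le (by linarith : 1 ≤ p / 2) hinner (two_mul_le_add_sq ‖u‖ ‖v‖)

theorem twoUniformlySmooth_of_innerProductSpace (hp : 2 ≤ p) :
    TwoUniformlySmooth E p (p - 1) := fun u v ↦ by
  refine le_trans ?_ (rpow_mean_add_abs_sub_le hp (norm_nonneg u) (norm_nonneg v))
  have hparallel := norm_add_rpow_add_norm_sub_rpow_le hp u v
  gcongr ?_ ^ (2 / p)
  linarith

end InnerProductSpace

section Lp

variable {α : Type*} {m : MeasurableSpace α} {μ : Measure α} {E : Type*} [NormedAddCommGroup E]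
  {f : α → E} {p c : ℝ}

lemma integral_norm_rpow_eq_lpNorm_rpow (hp : 0 < p) (hf : AEStronglyMeasurable f μ) :
    ∫ a, ‖f a‖ ^ p ∂μ = lpNorm f (ENNReal.ofReal p) μ ^ p := by
  rw [lpNorm_eq_integral_norm_rpow_toReal (by simpa using hp) ENNReal.ofReal_ne_top hf,
    ENNReal.toReal_ofReal hp.le,
    Real.rpow_inv_rpow (integral_nonneg fun _ ↦ by positivity) hp.ne']

lemma integrable_norm_rpow_of_memLp (hp : 0 < p) (hf : MemLp f (ENNReal.ofReal p) μ) :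
    Integrable (fun a ↦ ‖f a‖ ^ p) μ := by
  simpa only [ENNReal.toReal_ofReal hp.le] using
    hf.integrable_norm_rpow (by simpa using hp) ENNReal.ofReal_ne_top

lemma memLp_norm_sq (hf : MemLp f (ENNReal.ofReal p) μ) :
    MemLp (fun a ↦ ‖f a‖ ^ 2) (ENNReal.ofReal (p / 2)) μ := by
  simpa [ENNReal.ofReal_div_of_pos] using hf.norm_rpow_div 2

lemma lpNorm_norm_sq (hf : AEStronglyMeasurable f μ) :
    lpNorm (fun a ↦ ‖f a‖ ^ 2) (ENNReal.ofReal (p / 2)) μ = lpNorm f (ENNReal.ofReal p) μ ^ 2 := by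
  have heLpNorm := eLpNorm_norm_rpow (p := ENNReal.ofReal (p / 2)) (μ := μ) f zero_lt_two
  simp only [Real.rpow_two, ENNReal.rpow_two, ← ENNReal.ofReal_mul' zero_le_two,
    div_mul_cancel₀ p two_ne_zero] at heLpNorm
  rw [← toReal_eLpNorm (by fun_prop), heLpNorm, ENNReal.toReal_pow, toReal_eLpNorm hf]

lemma norm_Lp_eq_lpNorm {q : ENNReal} (x : Lp E q μ) : ‖x‖ = lpNorm x q μ := by
  rw [Lp.norm_def, toReal_eLpNorm (Lp.aestronglyMeasurable x)]

lemma lpNorm_norm_sq_add_le (hp : 2 ≤ p) (hc : 0 ≤ c) (x y : Lp E (ENNReal.ofReal p) μ) :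
    lpNorm (fun a ↦ ‖x a‖ ^ 2 + c * ‖y a‖ ^ 2) (ENNReal.ofReal (p / 2)) μ ≤
      ‖x‖ ^ 2 + c * ‖y‖ ^ 2 := by
  have hp_half : 1 ≤ ENNReal.ofReal (p / 2) := ENNReal.one_le_ofReal.2 (by linarith)
  refine (lpNorm_add_le (g := c • fun a ↦ ‖y a‖ ^ 2) (memLp_norm_sq (Lp.memLp x))
    hp_half).trans_eq ?_
  rw [lpNorm_const_smul, lpNorm_norm_sq (Lp.aestronglyMeasurable x),
    lpNorm_norm_sq (Lp.aestronglyMeasurable y), coe_nnnorm, Real.norm_of_nonneg hc,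
    norm_Lp_eq_lpNorm, norm_Lp_eq_lpNorm]

theorem TwoUniformlySmooth.lp [Fact (1 ≤ ENNReal.ofReal p)] (hE : TwoUniformlySmooth E p c)
    (hp : 2 ≤ p) (hc : 0 ≤ c) : TwoUniformlySmooth (Lp E (ENNReal.ofReal p) μ) p c := by
  intro x y
  have hp₀ : 0 < p := by linarith
  have hp_half : 0 < p / 2 := half_pos hp₀
  have hnorm (z : Lp E (ENNReal.ofReal p) μ) : ‖z‖ ^ p = ∫ a, ‖z a‖ ^ p ∂μ := by
    rw [integral_norm_rpow_eq_lpNorm_rpow hp₀ (Lp.aestronglyMeasurable z), norm_Lp_eq_lpNorm]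
  have hint (z : Lp E (ENNReal.ofReal p) μ) : Integrable (fun a ↦ ‖z a‖ ^ p) μ :=
    integrable_norm_rpow_of_memLp hp₀ (Lp.memLp z)
  set h : α → ℝ := fun a ↦ ‖x a‖ ^ 2 + c * ‖y a‖ ^ 2
  have hh_mem : MemLp h (ENNReal.ofReal (p / 2)) μ :=
    (memLp_norm_sq (Lp.memLp x)).add ((memLp_norm_sq (Lp.memLp y)).const_mul c)
  have hpointwise : ∀ᵐ a ∂μ, (‖(x + y) a‖ ^ p + ‖(x - y) a‖ ^ p) / 2 ≤ ‖h a‖ ^ (p / 2) := by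
    filter_upwards [Lp.coeFn_add x y, Lp.coeFn_sub x y] with a hadd hsub
    rw [hadd, hsub, ← Real.rpow_inv_le_iff_of_pos (by positivity) (norm_nonneg _) hp_half, inv_div]
    exact (hE (x a) (y a)).trans (Real.le_norm_self _)
  rw [← inv_div p 2, Real.rpow_inv_le_iff_of_pos (by positivity) (by positivity) hp_half]
  calc (‖x + y‖ ^ p + ‖x - y‖ ^ p) / 2
    _ = ∫ a, (‖(x + y) a‖ ^ p + ‖(x - y) a‖ ^ p) / 2 ∂μ := by
      rw [hnorm, hnorm, integral_div, integral_add (hint _) (hint _)]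
    _ ≤ ∫ a, ‖h a‖ ^ (p / 2) ∂μ :=
      integral_mono_ae (((hint _).add (hint _)).div_const 2)
        (integrable_norm_rpow_of_memLp hp_half hh_mem) hpointwise
    _ = lpNorm h (ENNReal.ofReal (p / 2)) μ ^ (p / 2) :=
      integral_norm_rpow_eq_lpNorm_rpow hp_half hh_mem.aestronglyMeasurable
    _ ≤ (‖x‖ ^ 2 + c * ‖y‖ ^ 2) ^ (p / 2) :=
      Real.rpow_le_rpow lpNorm_nonneg (lpNorm_norm_sq_add_le hp hc x y) hp_half.le

end Lp

theorem pythag_upper_large_p_general {α : Type*} [MeasurableSpace α] {E : Type*}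
    [NormedAddCommGroup E] [InnerProductSpace ℝ E] (μ : Measure α) (p : ℝ) (hp2 : 2 ≤ p)
    (x y : Lp E (ENNReal.ofReal p) μ) (horth : BirkhoffJamesOrthogonal ℝ x y) :
    ‖x + y‖ ^ 2 ≤ ‖x‖ ^ 2 + (p - 1) * ‖y‖ ^ 2 :=
  have : Fact (1 ≤ ENNReal.ofReal p) := ⟨ENNReal.one_le_ofReal.2 (by linarith)⟩
  ((twoUniformlySmooth_of_innerProductSpace hp2).lp hp2 (by linarith)).norm_add_sq_le hp2 horth

/-- Upper Pythagorean inequality for `2 ≤ p < ∞`: if `x` is Birkhoff–James orthogonal to `y`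
in `L^p(μ)`, then `‖x + y‖² ≤ ‖x‖² + (p − 1)·‖y‖²`. -/
theorem pythag_upper_large_p {α : Type*} [MeasurableSpace α] (μ : Measure α)
    (p : ℝ) (hp2 : 2 ≤ p)
    (x y : Lp ℂ (ENNReal.ofReal p) μ)
    (horth : ∀ β : ℂ, ‖x‖ ≤ ‖x + β • y‖) :
    ‖x + y‖ ^ 2 ≤ ‖x‖ ^ 2 + (p - 1) * ‖y‖ ^ 2 :=
  pythag_upper_large_p_general μ p hp2 x y (BirkhoffJamesOrthogonal.restrictScalars ℝ horth)
end
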